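/- arXiv:1610.05137 — 3 statements merged into one kernel-verified Lean document; each statement's English description precedes it below -/
import Mathlib

section
/- Let L be a finite join-semidistributive lattice. Then the canonical join complex of L is flag if and only if L is semidistributive (that is, L is also meet-semidistributive). -/
universe u v

def JoinSemidistrib (α : Type*) [Lattice α] : Prop :=
  ∀ x y z : α, x ⊔ y = x ⊔ z → x ⊔ (y ⊓ z) = x ⊔ y

def MeetSemidistrib (α : Type*) [Lattice α] : Prop :=
  ∀ x y z : α, x ⊓ y = x ⊓ z → x ⊓ (y ⊔ z) = x ⊓ y

section JoinDefs

variable {α : Type*} [Lattice α] [OrderBot α]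

/-- `j` is join-irreducible: not the bottom element, and `j = a ⊔ b` implies `j = a` or `j = b`. -/
def JoinIrred (j : α) : Prop :=
  j ≠ ⊥ ∧ ∀ a b : α, j = a ⊔ b → j = a ∨ j = b

/-- `A` join-refines `B`: every element of `A` is below some element of `B`. -/
def JoinRefines (A B : Finset α) : Prop :=
  ∀ a ∈ A, ∃ b ∈ B, a ≤ b

/-- `A` is an irredundant join representation of `w`. -/
def IrredJoinRep (A : Finset α) (w : α) : Prop :=
  A.sup id = w ∧ ∀ A' ⊂ A, A'.sup id < w

/-- `A` is the canonical join representation of `w`: the irredundant join representation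
of `w` that join-refines every irredundant join representation of `w`. -/
def CanonicalJoinRep (A : Finset α) (w : α) : Prop :=
  IrredJoinRep A w ∧ ∀ B : Finset α, IrredJoinRep B w → JoinRefines A B

/-- `A` joins canonically, i.e. `A` is a face of the canonical join complex. -/
def JoinsCanonically (A : Finset α) : Prop :=
  CanonicalJoinRep A (A.sup id)

/-- `j` is a canonical joinand of `w`. -/
def CanonicalJoinand (j w : α) : Prop :=
  ∃ A : Finset α, CanonicalJoinRep A w ∧ j ∈ A

end JoinDefs

/-- The canonical join complex is flag: any finite set of join-irreducible elements all of
whose two-element subsets are faces is itself a face. -/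
def FlagCanonicalJoinComplex (α : Type*) [Lattice α] [OrderBot α] [DecidableEq α] : Prop :=
  ∀ F : Finset α, (∀ j ∈ F, JoinIrred j) →
    (∀ j ∈ F, ∀ j' ∈ F, j ≠ j' → JoinsCanonically ({j, j'} : Finset α)) →
    JoinsCanonically F

/-- A lattice is crosscut-simplicial if for every `x ≤ y` and every proper subset `S` of the
set of atoms of the interval `[x, y]` (elements `a` with `x ⋖ a` and `a ≤ y`), the join of `x`
with all elements of `S` is strictly less than `y`. -/
def CrosscutSimplicial (β : Type*) [Lattice β] : Prop :=
  ∀ x y : β, x ≤ y → ∀ S : Finset β,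
    (∀ a ∈ S, x ⋖ a ∧ a ≤ y) →
    (∃ a : β, (x ⋖ a ∧ a ≤ y) ∧ a ∉ S) →
    S.fold (· ⊔ · : β → β → β) x id < y

section MeetDefs

variable {α : Type*} [Lattice α] [OrderTop α]

/-- `m` is meet-irreducible: not the top element, and `m = a ⊓ b` implies `m = a` or `m = b`. -/
def MeetIrred (m : α) : Prop :=
  m ≠ ⊤ ∧ ∀ a b : α, m = a ⊓ b → m = a ∨ m = b

/-- `A` meet-refines `B`: every element of `A` is above some element of `B`. -/
def MeetRefines (A B : Finset α) : Prop :=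
  ∀ a ∈ A, ∃ b ∈ B, b ≤ a

/-- `A` is an irredundant meet representation of `w`. -/
def IrredMeetRep (A : Finset α) (w : α) : Prop :=
  A.inf id = w ∧ ∀ A' ⊂ A, w < A'.inf id

/-- `A` is the canonical meet representation of `w`. -/
def CanonicalMeetRep (A : Finset α) (w : α) : Prop :=
  IrredMeetRep A w ∧ ∀ B : Finset α, IrredMeetRep B w → MeetRefines A B

/-- `A` meets canonically, i.e. `A` is a face of the canonical meet complex. -/
def MeetsCanonically (A : Finset α) : Prop :=
  CanonicalMeetRep A (A.inf id)

end MeetDefs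

/-- The canonical meet complex is flag. -/
def FlagCanonicalMeetComplex (α : Type*) [Lattice α] [OrderTop α] [DecidableEq α] : Prop :=
  ∀ F : Finset α, (∀ m ∈ F, MeetIrred m) →
    (∀ m ∈ F, ∀ m' ∈ F, m ≠ m' → MeetsCanonically ({m, m'} : Finset α)) →
    MeetsCanonically F


theorem aux_dist {α : Type*} [Lattice α] [OrderBot α] [DecidableEq α]
    (hjsd : JoinSemidistrib α) (u j : α) (B : Finset α) :
    (∀ b ∈ B, b ⊓ j ≤ u) → u ⊔ B.sup id = u ⊔ j → j ≤ u := by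
  induction B using Finset.induction_on with
  | empty =>
    intro _ h
    simp only [Finset.sup_empty, sup_bot_eq] at h
    rw [h]; exact le_sup_right
  | insert b B hb ih =>
    intro h1 h2
    apply ih (fun b' hb' => h1 b' (Finset.mem_insert_of_mem hb'))
    rw [Finset.sup_insert, id] at h2
    have hj : j ≤ u ⊔ (b ⊔ B.sup id) := h2 ▸ le_sup_right
    have hB : B.sup id ≤ u ⊔ j := h2 ▸ (le_sup_right.trans le_sup_right)
    have hbb : b ≤ u ⊔ j := h2 ▸ (le_sup_left.trans le_sup_right)
    have e1 : (u ⊔ B.sup id) ⊔ b = u ⊔ j := by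
      rw [← h2, sup_assoc, sup_comm (B.sup id) b]
    have e2 : (u ⊔ B.sup id) ⊔ j = u ⊔ j := by
      apply le_antisymm
      · exact sup_le (sup_le le_sup_left hB) le_sup_right
      · exact sup_le (le_sup_left.trans le_sup_left) le_sup_right
    have e3 := hjsd _ _ _ (e1.trans e2.symm)
    rw [e1] at e3
    rw [← e3]
    exact (sup_eq_left.2 ((h1 b (Finset.mem_insert_self _ _)).trans le_sup_left)).symm

theorem aux_A {α : Type*} [Lattice α] [OrderBot α] [DecidableEq α]
    (hjsd : JoinSemidistrib α) (F : Finset α)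
    (h : ∀ j ∈ F, ∃ u, (∀ s < j, s ≤ u) ∧ (∀ k ∈ F, k ≠ j → k ≤ u) ∧ ¬ j ≤ u) :
    JoinsCanonically F := by
  refine ⟨⟨rfl, ?_⟩, ?_⟩
  · intro A hA
    refine lt_of_le_of_ne (Finset.sup_mono hA.1) ?_
    intro he
    obtain ⟨j, hjF, hjA⟩ := Finset.exists_of_ssubset hA
    obtain ⟨u, _, h2, h3⟩ := h j hjF
    apply h3
    have : j ≤ A.sup id := he ▸ Finset.le_sup (f := id) hjF
    refine this.trans (Finset.sup_le fun k hk => h2 k (hA.1 hk) ?_)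
    rintro rfl
    exact hjA hk
  · intro B hB j hjF
    obtain ⟨u, h1, h2, h3⟩ := h j hjF
    by_contra! hcon
    apply h3
    apply aux_dist hjsd u j B
    · intro b hb
      apply h1
      refine lt_of_le_of_ne inf_le_right ?_
      intro e
      exact hcon b hb (inf_eq_right.1 e)
    · rw [hB.1]
      apply le_antisymm
      · refine sup_le le_sup_left (Finset.sup_le fun k hk => ?_)
        by_cases e : k = j
        · subst e; exact le_sup_right
        · exact (h2 k hk e).trans le_sup_left
      · exact sup_le_sup_left (Finset.le_sup (f := id) hjF) u

theorem aux_irr {α : Type*} [Lattice α] [OrderBot α] [DecidableEq α] (B : Finset α) :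
    ∃ B' ⊆ B, IrredJoinRep B' (B.sup id) := by
  induction B using Finset.strongInduction with
  | H B ih =>
    by_cases h : ∃ A, A ⊂ B ∧ A.sup id = B.sup id
    · obtain ⟨A, hA, he⟩ := h
      obtain ⟨B', h1, h2⟩ := ih A hA
      exact ⟨B', h1.trans hA.1, he ▸ h2⟩
    · push Not at h
      exact ⟨B, subset_rfl, rfl, fun A hA =>
        lt_of_le_of_ne (Finset.sup_mono hA.1) (h A hA)⟩

theorem aux_B {α : Type*} [Lattice α] [OrderBot α] [DecidableEq α] (F : Finset α)
    (h : JoinsCanonically F) (j : α) (hj : j ∈ F) (p : α) (hp : p < j) :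
    ¬ j ≤ p ⊔ (F.erase j).sup id := by
  intro hle
  have e : (insert p (F.erase j)).sup id = F.sup id := by
    rw [Finset.sup_insert, id]
    apply le_antisymm
    · exact sup_le (hp.le.trans (Finset.le_sup (f := id) hj))
        (Finset.sup_mono (Finset.erase_subset _ _))
    · refine Finset.sup_le fun k hk => ?_
      by_cases e : k = j
      · subst e; exact hle
      · exact le_trans (Finset.le_sup (f := id) (Finset.mem_erase.2 ⟨e, hk⟩)) le_sup_right
  obtain ⟨B, hB, hI⟩ := aux_irr (insert p (F.erase j))
  rw [e] at hI
  obtain ⟨b, hb, hjb⟩ := h.2 B hI j hj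
  rcases Finset.mem_insert.1 (hB hb) with rfl | hb'
  · exact absurd hjb (not_le_of_gt hp)
  · have h1 := h.1.2 _ (Finset.erase_ssubset hj)
    refine absurd h1 (not_lt_of_ge (Finset.sup_le fun k hk => ?_))
    by_cases e : k = j
    · subst e; exact le_trans hjb (Finset.le_sup (f := id) hb')
    · exact Finset.le_sup (f := id) (Finset.mem_erase.2 ⟨e, hk⟩)

theorem aux_star {α : Type*} [Lattice α] [OrderBot α] [Fintype α] [DecidableEq α]
    (j : α) (hj : JoinIrred j) : ∃ p < j, ∀ s < j, s ≤ p := by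
  classical
  refine ⟨(Finset.univ.filter (· < j)).sup id, ?_, fun s hs =>
    Finset.le_sup (f := id) (by simpa using hs)⟩
  apply Finset.sup_induction (p := fun x => x < j)
  · exact bot_lt_iff_ne_bot.2 hj.1
  · intro a ha b hb
    refine lt_of_le_of_ne (sup_le ha.le hb.le) fun e => ?_
    rcases hj.2 a b e.symm with h | h
    · exact ha.ne h.symm
    · exact hb.ne h.symm
  · intro b hb
    simpa using hb

theorem aux_least {α : Type*} [Lattice α] [OrderBot α] [Fintype α] [DecidableEq α]
    (hjsd : JoinSemidistrib α) (c w : α) (hc : c ≤ w) :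
    ∃ d, c ⊔ d = w ∧ ∀ s, c ⊔ s = w → d ≤ s := by
  obtain ⟨d, hd, hm⟩ := (Set.toFinite {s | c ⊔ s = w}).exists_minimal
    ⟨w, by simpa using hc⟩
  refine ⟨d, hd, fun s hs => ?_⟩
  have : c ⊔ (d ⊓ s) = w := (hjsd c d s (Eq.trans hd hs.symm)).trans hd
  exact (hm this inf_le_left).trans inf_le_right

theorem aux_cov {α : Type*} [Lattice α] {c w s : α} (h : c ⋖ w) (hs : s ≤ w)
    (hn : c ⊔ s ≠ w) : s ≤ c := by
  by_contra h'
  exact h.2 (lt_of_le_of_ne le_sup_left fun e => h' (e ▸ le_sup_right))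
    (lt_of_le_of_ne (sup_le h.le hs) hn)

theorem aux_cover {α : Type*} [Lattice α] [Fintype α] {a w : α} (h : a < w) :
    ∃ c, a ≤ c ∧ c ⋖ w := by
  obtain ⟨c, hc, hm⟩ := (Set.toFinite {s | a ≤ s ∧ s < w}).exists_maximal ⟨a, le_rfl, h⟩
  refine ⟨c, hc.1, hc.2, fun x hx hxw => ?_⟩
  exact absurd (hm ⟨hc.1.trans hx.le, hxw⟩ hx.le) (not_le_of_gt hx)

theorem aux_fwd {α : Type*} [Lattice α] [OrderBot α] [Fintype α] [DecidableEq α]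
    (hjsd : JoinSemidistrib α) (hflag : FlagCanonicalJoinComplex α) : MeetSemidistrib α := by
  classical
  intro x y z hyz
  by_contra hne
  have hnle : ¬ x ⊓ (y ⊔ z) ≤ x ⊓ y := fun h =>
    hne (le_antisymm h (inf_le_inf_left x le_sup_left))
  obtain ⟨j, ⟨hj1, hj2⟩, hjm⟩ := (Set.toFinite {s | s ≤ x ⊓ (y ⊔ z) ∧ ¬ s ≤ x ⊓ y}).exists_minimal
    ⟨_, le_rfl, hnle⟩
  have hlow : ∀ s < j, s ≤ x ⊓ y := by
    intro s hs
    by_contra h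
    exact absurd (hjm ⟨hs.le.trans hj1, h⟩ hs.le) (not_le_of_gt hs)
  have hjirr : JoinIrred j := by
    refine ⟨?_, ?_⟩
    · rintro rfl; exact hj2 bot_le
    · intro a b hab
      by_contra! h
      have ha : a < j := lt_of_le_of_ne (hab ▸ le_sup_left) h.1.symm
      have hb : b < j := lt_of_le_of_ne (hab ▸ le_sup_right) h.2.symm
      exact hj2 (hab ▸ sup_le (hlow a ha) (hlow b hb))
  obtain ⟨p, hpj, hp⟩ := aux_star j hjirr
  have hpm := hlow p hpj
  have hjx : j ≤ x := hj1.trans inf_le_left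
  have hjy : ¬ j ≤ y := fun h => hj2 (le_inf hjx h)
  have hjz : ¬ j ≤ z := fun h => hj2 (hyz ▸ le_inf hjx h)
  have hpy : p ≤ y := hpm.trans inf_le_right
  have hpz : p ≤ z := (hyz ▸ hpm : p ≤ x ⊓ z).trans inf_le_right
  have hjw : j ≤ y ⊔ z := hj1.trans inf_le_right
  set w := y ⊔ z with hw
  let D : Finset α := Finset.univ.filter
    fun d => ∃ c, c ⋖ w ∧ c ⊔ d = w ∧ ∀ s, c ⊔ s = w → d ≤ s
  have hD : ∀ d ∈ D, ∃ c, c ⋖ w ∧ c ⊔ d = w ∧ ∀ s, c ⊔ s = w → d ≤ s := by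
    intro d hd; simpa [D] using hd
  have hDw : ∀ d ∈ D, d ≤ w := by
    intro d hd
    obtain ⟨c, _, h, _⟩ := hD d hd
    rw [← h]; exact le_sup_right
  have hDyz : ∀ d ∈ D, d ≤ y ∨ d ≤ z := by
    intro d hd
    obtain ⟨c, hc, h1, h2⟩ := hD d hd
    by_contra! h
    have a := aux_cov hc le_sup_left fun e => h.1 (h2 y e)
    have b := aux_cov hc le_sup_right fun e => h.2 (h2 z e)
    exact absurd (sup_le a b) (not_le_of_gt hc.lt)
  have hDj : ∀ d ∈ D, ¬ j ≤ p ⊔ d := by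
    intro d hd h
    rcases hDyz d hd with h' | h'
    · exact hjy (h.trans (sup_le hpy h'))
    · exact hjz (h.trans (sup_le hpz h'))
  have hDsup : w ≤ D.sup id := by
    by_contra h
    have hlt : D.sup id < w := lt_of_le_of_ne (Finset.sup_le hDw) fun e => h e.ge
    obtain ⟨c, h1, hc⟩ := aux_cover hlt
    obtain ⟨d, hd1, hd2⟩ := aux_least hjsd c w hc.le
    have hd : d ∈ D := by
      simp only [D, Finset.mem_filter, Finset.mem_univ, true_and]
      exact ⟨c, hc, hd1, hd2⟩
    have : d ≤ c := (Finset.le_sup (f := id) hd).trans h1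
    rw [sup_eq_left.2 this] at hd1
    exact hc.lt.ne hd1
  -- the separating element for `d ∈ D`
  have hDu : ∀ d ∈ D, ∃ c, (∀ s < d, s ≤ c) ∧ ¬ d ≤ c ∧
      (∀ s ≤ w, ¬ d ≤ s → s ≤ c) ∧ (∀ k ∈ D, k ≠ d → k ≤ c) := by
    intro d hd
    obtain ⟨c, hc, h1, h2⟩ := hD d hd
    have h3 : ∀ s ≤ w, ¬ d ≤ s → s ≤ c := fun s hs hds =>
      aux_cov hc hs fun e => hds (h2 s e)
    refine ⟨c, fun s hs => h3 s (hs.le.trans (hDw d hd)) (not_le_of_gt hs), ?_, h3, ?_⟩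
    · intro h
      rw [sup_eq_left.2 h] at h1
      exact hc.lt.ne h1
    · intro k hk hkd
      obtain ⟨c', hc', h1', h2'⟩ := hD k hk
      have hcc : c' ≠ c := by
        rintro rfl
        exact hkd (le_antisymm (h2' d h1) (h2 k h1'))
      have : c' ⊔ c = w := by
        by_contra e
        have hle := aux_cov hc' hc.le e
        rcases hle.eq_or_lt with h | h
        · exact hcc h.symm
        · exact hc.2 h hc'.lt
      exact h2' c this
  have hDirr : ∀ d ∈ D, JoinIrred d := by
    intro d hd
    obtain ⟨c, h1, h2, _⟩ := hDu d hd
    refine ⟨?_, ?_⟩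
    · rintro rfl; exact h2 bot_le
    · intro a b hab
      by_contra! h
      have ha : a < d := lt_of_le_of_ne (hab ▸ le_sup_left) h.1.symm
      have hb : b < d := lt_of_le_of_ne (hab ▸ le_sup_right) h.2.symm
      exact h2 (hab ▸ sup_le (h1 a ha) (h1 b hb))
  let E := D.filter fun d => ¬ d ≤ j
  have hE : ∀ d ∈ E, d ∈ D ∧ ¬ d ≤ j := by
    intro d hd; simpa [E] using hd
  have hpair : ∀ d ∈ E, JoinsCanonically ({j, d} : Finset α) := by
    intro d hd
    obtain ⟨hdD, hdj⟩ := hE d hd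
    apply aux_A hjsd
    intro k hk
    rcases Finset.mem_insert.1 hk with rfl | hk
    · refine ⟨p ⊔ d, fun s hs => (hp s hs).trans le_sup_left, ?_, hDj d hdD⟩
      intro l hl hlk
      rcases Finset.mem_insert.1 hl with rfl | hl
      · exact absurd rfl hlk
      · rw [Finset.mem_singleton.1 hl]; exact le_sup_right
    · rw [Finset.mem_singleton] at hk
      subst hk
      obtain ⟨c, h1, h2, h3, _⟩ := hDu k hdD
      refine ⟨c, h1, ?_, h2⟩
      intro l hl hlk
      rcases Finset.mem_insert.1 hl with rfl | hl
      · exact h3 _ hjw hdj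
      · exact absurd (Finset.mem_singleton.1 hl) hlk
  have hG : JoinsCanonically (insert j E) := by
    apply hflag
    · intro k hk
      rcases Finset.mem_insert.1 hk with rfl | hk
      · exact hjirr
      · exact hDirr k (hE k hk).1
    · intro k hk l hl hkl
      rcases Finset.mem_insert.1 hk with rfl | hk
      · rcases Finset.mem_insert.1 hl with rfl | hl
        · exact absurd rfl hkl
        · exact hpair l hl
      · rcases Finset.mem_insert.1 hl with rfl | hl
        · rw [Finset.pair_comm]; exact hpair k hk
        · have hsub : ∀ a ∈ ({k, l} : Finset α), a ∈ D := by
            intro a ha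
            rcases Finset.mem_insert.1 ha with rfl | ha
            · exact (hE _ hk).1
            · rw [Finset.mem_singleton.1 ha]; exact (hE _ hl).1
          apply aux_A hjsd
          intro a ha
          obtain ⟨c, h1, h2, _, h4⟩ := hDu a (hsub a ha)
          exact ⟨c, h1, fun b hb hba => h4 b (hsub b hb) hba, h2⟩
  refine aux_B _ hG j (Finset.mem_insert_self _ _) p hpj (hjw.trans (hDsup.trans ?_))
  refine Finset.sup_le fun d hd => ?_
  have hdj : d ≠ j := by
    rintro rfl
    exact hDj d hd le_sup_right
  by_cases h : d ≤ j
  · exact (hp d (lt_of_le_of_ne h hdj)).trans le_sup_left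
  · refine le_trans (Finset.le_sup (f := id) ?_) le_sup_right
    refine Finset.mem_erase.2 ⟨hdj, Finset.mem_insert_of_mem ?_⟩
    exact Finset.mem_filter.2 ⟨hd, h⟩

theorem aux_bwd {α : Type*} [Lattice α] [OrderBot α] [Fintype α] [DecidableEq α]
    (hjsd : JoinSemidistrib α) (hm : MeetSemidistrib α) : FlagCanonicalJoinComplex α := by
  intro F hirr hpair
  apply aux_A hjsd
  intro j hj
  obtain ⟨p, hpj, hp⟩ := aux_star j (hirr j hj)
  have h1 : ∀ k ∈ F, k ≠ j → j ⊓ (p ⊔ k) = p := by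
    intro k hk hkj
    have hB := aux_B _ (hpair j hj k hk hkj.symm) j (Finset.mem_insert_self _ _) p hpj
    rw [Finset.erase_insert (by simpa using hkj.symm), Finset.sup_singleton, id] at hB
    apply le_antisymm
    · exact hp _ (lt_of_le_of_ne inf_le_left fun e => hB (inf_eq_left.1 e))
    · exact le_inf hpj.le le_sup_left
  have h2 : ∀ G : Finset α, G ⊆ F.erase j → j ⊓ (p ⊔ G.sup id) = p := by
    intro G
    induction G using Finset.induction_on with
    | empty => intro _; simpa using hpj.le
    | insert a G ha ih =>
      intro hG
      have i1 := ih fun x hx => hG (Finset.mem_insert_of_mem hx)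
      obtain ⟨haj, haF⟩ := Finset.mem_erase.1 (hG (Finset.mem_insert_self _ _))
      have i2 := h1 a haF haj
      have := hm _ _ _ (i2.trans i1.symm)
      rw [Finset.sup_insert, id, sup_sup_distrib_left, this, i2]
  refine ⟨p ⊔ (F.erase j).sup id, fun s hs => (hp s hs).trans le_sup_left, ?_, ?_⟩
  · intro k hk hkj
    exact le_trans (Finset.le_sup (f := id) (Finset.mem_erase.2 ⟨hkj, hk⟩)) le_sup_right
  · intro h
    have := h2 _ subset_rfl
    rw [inf_eq_left.2 h] at this
    exact hpj.ne this.symm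

/-- Theorem 1 (flag): a finite join-semidistributive lattice has flag canonical join complex
iff it is semidistributive. -/
theorem stmt_0 {α : Type*} [Lattice α] [OrderBot α] [Fintype α] [DecidableEq α]
    (hjsd : JoinSemidistrib α) :
    FlagCanonicalJoinComplex α ↔ (JoinSemidistrib α ∧ MeetSemidistrib α) :=
  ⟨fun h => ⟨hjsd, aux_fwd hjsd h⟩, fun h => aux_bwd hjsd h.2⟩
end

section
/- Let L be a finite join-semidistributive lattice. Then the following are equivalent: (1) the canonical join complex of L is flag; (2) L is crosscut-simplicial; (3) L is semidistributive. -/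
universe u v

section Helpers

variable {α : Type*} [Lattice α]

/-- failure of meet-semidistributivity at `m` -/
def FailAt (m : α) : Prop :=
  ∃ a y z : α, m ⋖ a ∧ m ≤ y ∧ m ≤ z ∧ ¬ a ≤ y ∧ ¬ a ≤ z ∧ a ≤ y ⊔ z

theorem claim_aux (h : JoinSemidistrib α) {a s y r : α} (hsy : s ≤ y) (hay : ¬ a ≤ y)
    (hr : r ≤ a ⊔ s) {m : α} (hm : m ⋖ a) (hmr : m ≤ r) (har : ¬ a ≤ r) (hmy : m ≤ y) :
    ¬ a ≤ y ⊔ r := by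
  intro hc
  have e : y ⊔ r = y ⊔ a := by
    apply le_antisymm
    · exact sup_le le_sup_left (hr.trans (sup_le le_sup_right (hsy.trans le_sup_left)))
    · exact sup_le le_sup_left hc
  have e2 := h y r a e
  have e3 : r ⊓ a ≤ m := by
    have h1 : m ≤ r ⊓ a := le_inf hmr hm.le
    rcases hm.eq_or_eq h1 inf_le_right with h2 | h2
    · exact h2.le
    · exact absurd (h2 ▸ inf_le_left) har
  have e4 : y ⊔ (r ⊓ a) ≤ y := sup_le le_rfl (e3.trans hmy)
  exact hay (hc.trans (e2 ▸ e4))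

theorem step_aux [Finite α] (h : JoinSemidistrib α) {m a s u v : α} (hm : m ⋖ a) (hs : m < s)
    (hsu : s ≤ u) (hsv : s ≤ v) (hau : ¬ a ≤ u) (hav : ¬ a ≤ v) (huv : a ≤ u ⊔ v) :
    ∃ r, m < r ∧ FailAt r := by
  obtain ⟨r, hsr, hr⟩ := (Set.toFinite {r : α | r ≤ a ⊔ s ∧ ¬ a ≤ r}).exists_le_maximal
    (a := s) ⟨le_sup_right, fun hc => hau (hc.trans hsu)⟩
  have hr1 : r ≤ a ⊔ s := hr.prop.1
  have hr2 : ¬ a ≤ r := hr.prop.2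
  have hmr : m < r := hs.trans_le hsr
  refine ⟨r, hmr, a ⊔ s, u ⊔ r, v ⊔ r, ⟨?_, ?_⟩, le_sup_right, le_sup_right, ?_, ?_, ?_⟩
  · exact lt_of_le_of_ne hr1 (fun e => hr2 (e ▸ le_sup_left))
  · intro e hre hea
    have : a ≤ e := by
      by_contra hc
      exact hre.not_ge (hr.le_of_ge ⟨hea.le, hc⟩ hre.le)
    exact hea.not_ge (sup_le this (hsr.trans hre.le))
  · intro hc
    exact claim_aux h hsu hau hr1 hm hmr.le hr2 (hs.le.trans hsu) (le_sup_left.trans hc)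
  · intro hc
    exact claim_aux h hsv hav hr1 hm hmr.le hr2 (hs.le.trans hsv) (le_sup_left.trans hc)
  · apply sup_le
    · exact huv.trans (sup_le_sup le_sup_left le_sup_left)
    · exact hsu.trans (le_sup_left.trans le_sup_left)

theorem noFail [Finite α] (h : JoinSemidistrib α) (hc : CrosscutSimplicial α) (m : α) :
    ¬ FailAt m := by
  classical
  induction m using WellFoundedGT.induction with
  | _ m ih =>
  rintro ⟨a, y, z, hm, hmy, hmz, hay, haz, hyz⟩
  have hmy' : m < y := lt_of_le_of_ne hmy (by rintro rfl; rw [sup_eq_right.2 hmz] at hyz; exact haz hyz)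
  have hmz' : m < z := lt_of_le_of_ne hmz (by rintro rfl; rw [sup_eq_left.2 hmy] at hyz; exact hay hyz)
  obtain ⟨s, hms, hsy⟩ := exists_covBy_le_of_lt hmy'
  obtain ⟨t, hmt, htz⟩ := exists_covBy_le_of_lt hmz'
  by_cases h1 : a ≤ s ⊔ t
  · have := hc m (s ⊔ t) (hms.le.trans le_sup_left) {s, t} (by
      intro b hb
      simp only [Finset.mem_insert, Finset.mem_singleton] at hb
      rcases hb with rfl | rfl
      · exact ⟨hms, le_sup_left⟩
      · exact ⟨hmt, le_sup_right⟩) ⟨a, ⟨hm, h1⟩, by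
        simp only [Finset.mem_insert, Finset.mem_singleton]
        rintro (rfl | rfl)
        · exact hay hsy
        · exact haz htz⟩
    rw [Finset.fold_insert_idem, Finset.fold_singleton] at this
    simp only [id] at this
    rw [sup_eq_left.2 hmt.le] at this
    exact lt_irrefl _ this
  · by_cases h2 : a ≤ y ⊔ t
    · obtain ⟨r, hr, hf⟩ := step_aux h hm hms.lt hsy le_sup_left hay h1
        (h2.trans (sup_le_sup le_rfl le_sup_right))
      exact ih r hr hf
    · obtain ⟨r, hr, hf⟩ := step_aux h hm hmt.lt le_sup_right htz h2 haz
        (hyz.trans (sup_le_sup le_sup_left le_rfl))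
      exact ih r hr hf

theorem msd_of_crosscut [Finite α] (h : JoinSemidistrib α) (hc : CrosscutSimplicial α) :
    MeetSemidistrib α := by
  intro x y z e
  by_contra hne
  have hlt : x ⊓ y < x ⊓ (y ⊔ z) :=
    lt_of_le_of_ne (inf_le_inf le_rfl le_sup_left) (Ne.symm hne)
  obtain ⟨a, ha, hle⟩ := exists_covBy_le_of_lt hlt
  refine noFail h hc (x ⊓ y) ⟨a, y, z, ha, inf_le_right, e ▸ inf_le_right, ?_, ?_, 
    hle.trans inf_le_right⟩
  · intro hay
    exact ha.lt.not_ge (le_inf (hle.trans inf_le_left) hay)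
  · intro haz
    exact ha.lt.not_ge (e ▸ le_inf (hle.trans inf_le_left) haz)

theorem crosscut_of_msd (h : MeetSemidistrib α) : CrosscutSimplicial α := by
  classical
  rintro x y hxy S hS ⟨a, ⟨hxa, hay⟩, haS⟩
  have key : S.fold (· ⊔ · : α → α → α) x id ≤ y ∧
      a ⊓ S.fold (· ⊔ · : α → α → α) x id = x := by
    induction S using Finset.induction_on with
    | empty => exact ⟨hxy, by simpa using hxa.le⟩
    | insert b S hb ih =>
      obtain ⟨i1, i2⟩ := ih (fun c hc => hS c (Finset.mem_insert_of_mem hc))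
        (fun hc => haS (Finset.mem_insert_of_mem hc))
      have hbb := hS b (Finset.mem_insert_self _ _)
      rw [Finset.fold_insert hb]
      refine ⟨sup_le hbb.2 i1, ?_⟩
      have hab : a ⊓ b = x := by
        rcases hxa.eq_or_eq (le_inf hxa.le hbb.1.le) inf_le_left with h1 | h1
        · exact h1
        · exfalso
          have hle : a ≤ b := h1 ▸ inf_le_right
          rcases hbb.1.eq_or_eq hxa.le hle with h2 | h2
          · exact hxa.lt.ne' h2
          · exact haS (h2 ▸ Finset.mem_insert_self _ _)
      have := h a b _ (hab.trans i2.symm)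
      exact this.trans hab
  refine lt_of_le_of_ne key.1 (fun e => ?_)
  have h2 := key.2
  rw [e, inf_eq_left.2 hay] at h2
  exact hxa.lt.ne' h2

variable [OrderBot α]

theorem exists_irred [DecidableEq α] (G : Finset α) :
    ∃ B ⊆ G, IrredJoinRep B (G.sup id) := by
  obtain ⟨B, hBG, hB⟩ := (G.powerset.finite_toSet.subset (t := {B : Finset α | B ⊆ G ∧ B.sup id = G.sup id})
    (fun B hB => Finset.mem_coe.2 (Finset.mem_powerset.2 hB.1))).exists_le_minimal
    (a := G) ⟨subset_rfl, rfl⟩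
  refine ⟨B, hBG, hB.prop.2, fun A hA => ?_⟩
  refine lt_of_le_of_ne (Finset.sup_mono (hA.subset.trans hBG)) (fun e => ?_)
  exact hA.2 (hB.le_of_le ⟨hA.subset.trans hBG, e⟩ hA.subset)

theorem ji_sup_lt {j : α} (hj : JoinIrred j) (B : Finset α) (f : α → α)
    (h : ∀ b ∈ B, f b < j) : B.sup f < j := by
  classical
  induction B using Finset.induction_on with
  | empty => simpa using bot_lt_iff_ne_bot.2 hj.1
  | insert b B hb ih =>
    rw [Finset.sup_insert]
    have h1 := h b (Finset.mem_insert_self _ _)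
    have h2 := ih (fun c hc => h c (Finset.mem_insert_of_mem hc))
    refine lt_of_le_of_ne (sup_le h1.le h2.le) (fun e => ?_)
    rcases hj.2 _ _ e.symm with h3 | h3
    · exact h1.ne' h3
    · exact h2.ne' h3

theorem gen_jsd (h : JoinSemidistrib α) (j : α) (B : Finset α) : ∀ x : α,
    j ≤ x ⊔ B.sup id → B.sup id ≤ x ⊔ j → j ≤ x ⊔ B.sup (fun b => j ⊓ b) := by
  classical
  induction B using Finset.induction_on with
  | empty => intro x h1 _; simpa using h1
  | insert b B hb ih =>
    intro x h1 h2
    rw [Finset.sup_insert] at h1 h2 ⊢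
    simp only [id] at h1 h2
    have hbx : b ≤ x ⊔ j := le_sup_left.trans h2
    have hBx : B.sup id ≤ x ⊔ j := le_sup_right.trans h2
    have e : (x ⊔ B.sup id) ⊔ j = (x ⊔ B.sup id) ⊔ b := by
      apply le_antisymm
      · refine sup_le le_sup_left (h1.trans ?_)
        exact sup_le (le_sup_left.trans le_sup_left)
          (sup_le le_sup_right (le_sup_right.trans le_sup_left))
      · exact sup_le le_sup_left (hbx.trans (sup_le_sup le_sup_left le_rfl))
    have e2 := h _ _ _ e
    have h3 : j ≤ (x ⊔ (j ⊓ b)) ⊔ B.sup id := by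
      have : j ≤ x ⊔ B.sup id ⊔ j ⊓ b := by rw [e2]; exact le_sup_right
      rwa [sup_right_comm] at this
    have := ih (x ⊔ (j ⊓ b)) h3 (hBx.trans (sup_le_sup le_sup_left le_rfl))
    rwa [sup_assoc] at this

theorem canon_iff [DecidableEq α] (h : JoinSemidistrib α) (F : Finset α)
    (hF : ∀ j ∈ F, JoinIrred j) :
    JoinsCanonically F ↔ ∀ j ∈ F, ∀ c < j, ¬ j ≤ c ⊔ (F.erase j).sup id := by
  have hins : ∀ j ∈ F, F.sup id = j ⊔ (F.erase j).sup id := by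
    intro j hj
    conv_lhs => rw [← Finset.insert_erase hj, Finset.sup_insert]
    rfl
  constructor
  · rintro ⟨hirr, hcan⟩ j hj c hcj hle
    have hG : (insert c (F.erase j)).sup id = F.sup id := by
      rw [hins j hj, Finset.sup_insert]
      exact le_antisymm (sup_le_sup hcj.le le_rfl) (sup_le hle le_sup_right)
    obtain ⟨B, hB, hBi⟩ := exists_irred (insert c (F.erase j))
    rw [hG] at hBi
    obtain ⟨b, hb, hjb⟩ := hcan B hBi j hj
    rcases Finset.mem_insert.1 (hB hb) with rfl | hb'
    · exact hcj.not_ge hjb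
    · have h1 := hirr.2 _ (Finset.erase_ssubset hj)
      rw [hins j hj] at h1
      exact h1.not_ge (sup_le (hjb.trans (Finset.le_sup (f := id) hb')) le_rfl)
  · intro hc
    refine ⟨⟨rfl, fun A hA => ?_⟩, fun B hB j hj => ?_⟩
    · refine lt_of_le_of_ne (Finset.sup_mono hA.subset) (fun e => ?_)
      obtain ⟨j, hj, hjA⟩ := Finset.exists_of_ssubset hA
      refine hc j hj ⊥ (bot_lt_iff_ne_bot.2 (hF j hj).1) ?_
      rw [bot_sup_eq]
      calc j ≤ F.sup id := Finset.le_sup (f := id) hj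
        _ = A.sup id := e.symm
        _ ≤ _ := Finset.sup_mono (fun a ha => Finset.mem_erase.2
          ⟨by rintro rfl; exact hjA ha, hA.subset ha⟩)
    · by_contra hno
      push Not at hno
      have h1 := gen_jsd h j B ((F.erase j).sup id)
        (by rw [hB.1]; exact (Finset.le_sup (f := id) hj).trans le_sup_right)
        (by rw [hB.1, hins j hj, sup_comm])
      refine hc j hj (B.sup (fun b => j ⊓ b)) (ji_sup_lt (hF j hj) _ _ ?_) (by rwa [sup_comm])
      intro b hb
      exact lt_of_le_of_ne inf_le_left (fun e => hno b hb (inf_eq_left.1 e))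

theorem exists_star [Finite α] {j : α} (hj : JoinIrred j) : ∃ s < j, ∀ c < j, c ≤ s := by
  classical
  have := Fintype.ofFinite α
  refine ⟨(Finset.univ.filter (· < j)).sup id, ji_sup_lt hj _ _ (by simp), fun c hc => ?_⟩
  exact Finset.le_sup (f := id) (by simpa using hc)

theorem flag_of_msd [Finite α] [DecidableEq α] (h : JoinSemidistrib α) (h' : MeetSemidistrib α) :
    FlagCanonicalJoinComplex α := by
  intro F hF hpair
  rw [canon_iff h F hF]
  intro j hj c hc hle
  obtain ⟨s, hs, hsc⟩ := exists_star (hF j hj)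
  have key : ∀ G ⊆ F.erase j, j ⊓ (s ⊔ G.sup id) = s := by
    intro G
    induction G using Finset.induction_on with
    | empty => intro _; simpa using hs.le
    | insert b G hb ih =>
      intro hG
      have i := ih (fun x hx => hG (Finset.mem_insert_of_mem hx))
      have hb' := Finset.mem_erase.1 (hG (Finset.mem_insert_self _ _))
      have hp := (canon_iff h {j, b} (by
        intro x hx
        simp only [Finset.mem_insert, Finset.mem_singleton] at hx
        rcases hx with rfl | rfl
        · exact hF _ hj
        · exact hF _ hb'.2)).1 (hpair j hj b hb'.2 (Ne.symm hb'.1)) j (by simp) s hs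
      rw [Finset.erase_insert (by simpa using Ne.symm hb'.1), Finset.sup_singleton] at hp
      have e : j ⊓ (s ⊔ b) = s := by
        apply le_antisymm
        · exact hsc _ (lt_of_le_of_ne inf_le_left (fun e => hp (inf_eq_left.1 e)))
        · exact le_inf hs.le le_sup_left
      have := h' _ _ _ (e.trans i.symm)
      rw [e, ← sup_sup_distrib_left] at this
      rw [Finset.sup_insert]
      exact this
  have k := key _ subset_rfl
  rw [inf_eq_left.2 (hle.trans (sup_le_sup (hsc c hc) le_rfl))] at k
  exact hs.ne' k

theorem msd_of_flag [Finite α] [DecidableEq α] (h : JoinSemidistrib α)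
    (hflag : FlagCanonicalJoinComplex α) : MeetSemidistrib α := by
  have := Fintype.ofFinite α
  intro x y z exyz
  by_contra hne
  have hlt : x ⊓ y < x ⊓ (y ⊔ z) :=
    lt_of_le_of_ne (inf_le_inf le_rfl le_sup_left) (Ne.symm hne)
  obtain ⟨j, hjle, hjm⟩ := (Set.toFinite {j : α | j ≤ x ⊓ (y ⊔ z) ∧ ¬ j ≤ x ⊓ y}).exists_le_minimal
    (a := x ⊓ (y ⊔ z)) ⟨le_rfl, hlt.not_ge⟩
  have hjlt : ∀ c < j, c ≤ x ⊓ y := by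
    intro c hc
    by_contra hn
    exact hc.not_ge (hjm.le_of_le ⟨hc.le.trans hjle, hn⟩ hc.le)
  have hjn : ¬ j ≤ x ⊓ y := hjm.prop.2
  have hj : JoinIrred j := by
    refine ⟨fun e => hjn (e ▸ bot_le), fun a b e => ?_⟩
    by_contra hn
    push Not at hn
    have ha : a < j := lt_of_le_of_ne (e ▸ le_sup_left) (Ne.symm hn.1)
    have hb : b < j := lt_of_le_of_ne (e ▸ le_sup_right) (Ne.symm hn.2)
    exact hjn (e.le.trans (sup_le (hjlt a ha) (hjlt b hb)))
  obtain ⟨s, hs, hsc⟩ := exists_star hj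
  have hsm := hjlt s hs
  have hjy : ¬ j ≤ y := fun hc => hjn (le_inf (hjle.trans inf_le_left) hc)
  have hjz : ¬ j ≤ z := fun hc => hjn (exyz ▸ le_inf (hjle.trans inf_le_left) hc)
  have hsy : s ≤ y := hsm.trans inf_le_right
  have hsz : s ≤ z := (exyz ▸ hsm : s ≤ x ⊓ z).trans inf_le_right
  classical
  let P : Set (Finset α) := {D | (∀ d ∈ D, ∀ c ≤ d, c ∈ D) ∧ (∀ d ∈ D, ¬ j ≤ s ⊔ d) ∧
    j ≤ s ⊔ D.sup id}
  obtain ⟨D, -, hD⟩ := (Set.toFinite P).exists_le_minimal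
    (a := Finset.univ.filter (fun d => d ≤ y ∨ d ≤ z)) (by
      refine ⟨?_, ?_, ?_⟩
      · intro d hd c hc
        simp only [Finset.mem_filter, Finset.mem_univ, true_and] at hd ⊢
        exact hd.imp hc.trans hc.trans
      · intro d hd hc
        simp only [Finset.mem_filter, Finset.mem_univ, true_and] at hd
        rcases hd with hd | hd
        · exact hjy (hc.trans (sup_le hsy hd))
        · exact hjz (hc.trans (sup_le hsz hd))
      · refine (hjle.trans inf_le_right).trans (le_sup_of_le_right (sup_le ?_ ?_))
        · exact Finset.le_sup (f := id) (by simp)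
        · exact Finset.le_sup (f := id) (by simp))
  obtain ⟨hD1, hD2, hD3⟩ := hD.prop
  let Y := D.filter (fun d => ∀ e ∈ D, d ≤ e → e = d)
  have hYD : ∀ d ∈ Y, d ∈ D := fun d hd => (Finset.mem_filter.1 hd).1
  have hYsup : D.sup id ≤ Y.sup id := by
    refine Finset.sup_le (fun d hd => ?_)
    obtain ⟨e, hde, he⟩ := D.finite_toSet.exists_le_maximal (a := d) hd
    refine le_trans hde (Finset.le_sup (f := id) (Finset.mem_filter.2 ⟨he.prop, ?_⟩))
    intro e' he' hee'
    exact le_antisymm (he.le_of_ge he' hee') hee'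
  have hrem : ∀ d ∈ Y, ¬ j ≤ s ⊔ (D.erase d).sup id := by
    intro d hd hc
    have hdm := (Finset.mem_filter.1 hd)
    have hP : D.erase d ∈ P := by
      refine ⟨?_, fun e he => hD2 e (Finset.mem_of_mem_erase he), hc⟩
      intro e he c hce
      have he' := Finset.mem_erase.1 he
      refine Finset.mem_erase.2 ⟨?_, hD1 e he'.2 c hce⟩
      rintro rfl
      exact he'.1 (hdm.2 e he'.2 hce)
    have := hD.le_of_le hP (Finset.erase_subset _ _)
    exact Finset.notMem_erase d D (this hdm.1)
  have hrem' : ∀ d ∈ Y, ¬ d ≤ s ⊔ (D.erase d).sup id := by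
    intro d hd hc
    refine hrem d hd (hD3.trans (sup_le le_sup_left ?_))
    rw [← Finset.insert_erase (hYD d hd), Finset.sup_insert]
    rw [Finset.erase_insert (Finset.notMem_erase _ _)]
    exact sup_le hc le_sup_right
  have hlow : ∀ d ∈ Y, ∀ c < d, c ≤ (D.erase d).sup id := by
    intro d hd c hc
    exact Finset.le_sup (f := id) (Finset.mem_erase.2 ⟨hc.ne, hD1 d (hYD d hd) c hc.le⟩)
  have hYJ : ∀ d ∈ Y, JoinIrred d := by
    intro d hd
    refine ⟨fun e => hrem' d hd (e ▸ bot_le), fun a b e => ?_⟩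
    by_contra hn
    push Not at hn
    have ha : a < d := lt_of_le_of_ne (e ▸ le_sup_left) (Ne.symm hn.1)
    have hb : b < d := lt_of_le_of_ne (e ▸ le_sup_right) (Ne.symm hn.2)
    exact hrem' d hd (e.le.trans (sup_le ((hlow d hd a ha).trans le_sup_right)
      ((hlow d hd b hb).trans le_sup_right)))
  have hjY : j ∉ Y := fun hc => hD2 j (hYD j hc) le_sup_right
  have hFJ : ∀ d ∈ insert j Y, JoinIrred d := by
    intro d hd
    rcases Finset.mem_insert.1 hd with rfl | hd
    · exact hj
    · exact hYJ d hd
  have hA : ∀ d ∈ Y, ∀ c < j, ¬ j ≤ c ⊔ d := fun d hd c hc hle =>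
    hD2 d (hYD d hd) (hle.trans (sup_le_sup (hsc c hc) le_rfl))
  have hB : ∀ d ∈ Y, ∀ c < d, ¬ d ≤ c ⊔ j := by
    intro d hd c hc hle
    set X := s ⊔ (D.erase d).sup id with hX
    have hDX : s ⊔ D.sup id ≤ X ⊔ d := by
      rw [← Finset.insert_erase (hYD d hd), Finset.sup_insert]
      exact sup_le (le_sup_left.trans le_sup_left)
        (sup_le le_sup_right (le_sup_right.trans le_sup_left))
    have hcX : c ≤ X := (hlow d hd c hc).trans le_sup_right
    have e : X ⊔ j = X ⊔ d :=
      le_antisymm (sup_le le_sup_left (hD3.trans hDX))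
        (sup_le le_sup_left (hle.trans (sup_le_sup hcX le_rfl)))
    have e2 := h _ _ _ e
    have h3 : j ⊓ d ≤ X := by
      refine (hsc _ (lt_of_le_of_ne inf_le_left (fun e => ?_))).trans le_sup_left
      exact hD2 d (hYD d hd) ((inf_eq_left.1 e).trans le_sup_right)
    rw [sup_eq_left.2 h3] at e2
    exact hrem d hd (le_sup_right.trans e2.ge)
  have hC : ∀ d ∈ Y, ∀ d' ∈ Y, d ≠ d' → ∀ c < d, ¬ d ≤ c ⊔ d' := by
    intro d hd d' hd' hdd c hc hle
    refine hrem' d hd (hle.trans (le_sup_of_le_right (sup_le (hlow d hd c hc) ?_)))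
    exact Finset.le_sup (f := id) (Finset.mem_erase.2 ⟨Ne.symm hdd, hYD d' hd'⟩)
  have hpair : ∀ d ∈ insert j Y, ∀ d' ∈ insert j Y, d ≠ d' → ∀ c < d, ¬ d ≤ c ⊔ d' := by
    intro d hd d' hd' hdd
    rcases Finset.mem_insert.1 hd with h1 | h1 <;> rcases Finset.mem_insert.1 hd' with h2 | h2
    · exact absurd (h1.trans h2.symm) hdd
    · subst h1; exact hA d' h2
    · subst h2; exact hB d h1
    · exact hC d h1 d' h2 hdd
  have hcan := hflag (insert j Y) hFJ (by
    intro d hd d' hd' hdd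
    rw [canon_iff h _ (by
      intro x hx
      simp only [Finset.mem_insert, Finset.mem_singleton] at hx
      rcases hx with rfl | rfl
      · exact hFJ _ hd
      · exact hFJ _ hd')]
    intro e he c hc
    simp only [Finset.mem_insert, Finset.mem_singleton] at he
    rcases he with rfl | rfl
    · rw [Finset.erase_insert (by simpa using hdd), Finset.sup_singleton]
      exact hpair _ hd _ hd' hdd c hc
    · rw [Finset.pair_comm, Finset.erase_insert (by simpa using hdd.symm), Finset.sup_singleton]
      exact hpair _ hd' _ hd hdd.symm c hc)
  rw [canon_iff h _ hFJ] at hcan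
  refine hcan j (Finset.mem_insert_self _ _) s hs ?_
  rw [Finset.erase_insert hjY]
  exact hD3.trans (sup_le_sup le_rfl hYsup)

end Helpers

/-- Theorem 2 (crosscut converse): for a finite join-semidistributive lattice, flagness of the
canonical join complex, crosscut-simpliciality, and semidistributivity are equivalent. -/
theorem stmt_1 {α : Type*} [Lattice α] [OrderBot α] [Fintype α] [DecidableEq α]
    (hjsd : JoinSemidistrib α) :
    List.TFAE [FlagCanonicalJoinComplex α, CrosscutSimplicial α,
      JoinSemidistrib α ∧ MeetSemidistrib α] := by
  tfae_have 1 → 3 := fun h => ⟨hjsd, msd_of_flag hjsd h⟩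
  tfae_have 3 → 1 := fun h => flag_of_msd h.1 h.2
  tfae_have 2 → 3 := fun h => ⟨hjsd, msd_of_crosscut hjsd h⟩
  tfae_have 3 → 2 := fun h => crosscut_of_msd h.2
  tfae_finish
end

section
/- Let L be a finite join-semidistributive lattice that is not meet-semidistributive. Then there exist an element a ∈ L and pairwise distinct elements x, y, z ∈ L, each covering a, such that x < y ∨ z. -/
universe u v

/-- Local step: above an element `y₁ > a` not above `x`, being not above `x` is closed under
joins, provided the cover property already holds strictly above `a`. -/
theorem crosscut_step {α : Type*} [Lattice α] [Finite α] (hjsd : JoinSemidistrib α)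
    {a x y₁ p q : α}
    (ih : ∀ b, a < b → ∀ x y z : α, b ⋖ x → b ≤ y → b ≤ z → ¬ x ≤ y → ¬ x ≤ z → ¬ x ≤ y ⊔ z)
    (hx : a ⋖ x) (hy : a < y₁) (hp : y₁ ≤ p) (hq : y₁ ≤ q) (hxp : ¬ x ≤ p) (hxq : ¬ x ≤ q) :
    ¬ x ≤ p ⊔ q := by
  intro h
  have hlt : y₁ < x ⊔ y₁ :=
    lt_of_le_of_ne le_sup_right fun e => hxp (le_trans (e ▸ le_sup_left) hp)
  obtain ⟨c, hc1, hc2⟩ := exists_le_covBy_of_lt hlt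
  have hxc : ¬ x ≤ c := fun hh => absurd hc2.lt (not_lt_of_ge (sup_le hh hc1))
  have hac : a < c := lt_of_lt_of_le hy hc1
  have hinf : x ⊓ c = a := by
    rcases hx.eq_or_eq (le_inf hx.le hac.le) inf_le_left with h1 | h1
    · exact h1
    · exact absurd (inf_eq_left.mp h1) hxc
  have key : ∀ r, y₁ ≤ r → ¬ x ≤ r → ¬ x ⊔ y₁ ≤ r ⊔ c := by
    intro r hr hxr hle
    have e : r ⊔ x = r ⊔ c := by
      apply le_antisymm
      · exact sup_le le_sup_left (le_trans le_sup_left hle)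
      · exact sup_le le_sup_left
          (le_trans hc2.le (sup_le le_sup_right (le_trans hr le_sup_left)))
    have h2 := hjsd r x c e
    rw [hinf, sup_eq_left.mpr (le_trans hy.le hr)] at h2
    exact hxr (h2 ▸ le_sup_right)
  refine ih c hac (x ⊔ y₁) (p ⊔ c) (q ⊔ c) hc2 le_sup_right le_sup_right
    (key p hp hxp) (key q hq hxq) ?_
  refine sup_le (le_trans h ?_) (le_trans hp (le_trans le_sup_left le_sup_left))
  exact sup_le_sup le_sup_left le_sup_left

theorem crosscut_local {α : Type*} [Lattice α] [Finite α] (hjsd : JoinSemidistrib α)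
    (hcr : ∀ a x y z : α, a ⋖ x → a ⋖ y → a ⋖ z → x ≠ y → x ≠ z → ¬ x ≤ y ⊔ z) (a : α) :
    ∀ x y z : α, a ⋖ x → a ≤ y → a ≤ z → ¬ x ≤ y → ¬ x ≤ z → ¬ x ≤ y ⊔ z := by
  induction a using (wellFounded_gt (α := α)).induction with
  | _ a ih =>
    intro x y z hx hy hz hxy hxz h
    have hay : a < y := lt_of_le_of_ne hy fun e => hxz (by
      subst e; rwa [sup_eq_right.mpr hz] at h)
    have haz : a < z := lt_of_le_of_ne hz fun e => hxy (by
      subst e; rwa [sup_eq_left.mpr hy] at h)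
    obtain ⟨y₁, hy1, hy2⟩ := exists_covBy_le_of_lt hay
    obtain ⟨z₁, hz1, hz2⟩ := exists_covBy_le_of_lt haz
    have hs : ¬ x ≤ y₁ ⊔ z₁ := hcr a x y₁ z₁ hx hy1 hz1
      (fun e => hxy (e ▸ hy2)) (fun e => hxz (e ▸ hz2))
    have h1 := crosscut_step hjsd ih hx hy1.lt hy2 le_sup_left hxy hs
    have h2 := crosscut_step hjsd ih hx hz1.lt (le_trans le_sup_right le_sup_right) hz2 h1 hxz
    exact h2 (le_trans h (sup_le_sup_right le_sup_left _))

/-- Lemma (crosscut lemma): a finite join-semidistributive lattice that is not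
meet-semidistributive contains three distinct covers `x, y, z` of a common element `a`
with `x < y ⊔ z`. -/
theorem stmt_15 {α : Type*} [Lattice α] [Fintype α]
    (hjsd : JoinSemidistrib α) (hmsd : ¬ MeetSemidistrib α) :
    ∃ a x y z : α, a ⋖ x ∧ a ⋖ y ∧ a ⋖ z ∧
      x ≠ y ∧ x ≠ z ∧ y ≠ z ∧ x < y ⊔ z := by
  by_contra hcon
  apply hmsd
  have hcr : ∀ a x y z : α, a ⋖ x → a ⋖ y → a ⋖ z → x ≠ y → x ≠ z → ¬ x ≤ y ⊔ z := by
    intro a x y z hx hy hz hxy hxz hle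
    have hyx : ∀ w, a ⋖ w → x ≠ w → ¬ w ≤ x := by
      intro w hw hne hwx
      rcases hx.eq_or_eq hw.le hwx with h1 | h1
      · exact hw.lt.ne' h1
      · exact hne h1.symm
    have hyz : y ≠ z := by
      rintro rfl
      rw [sup_idem] at hle
      rcases hy.eq_or_eq hx.le hle with h1 | h1
      · exact hx.lt.ne' h1
      · exact hxy h1
    exact hcon ⟨a, x, y, z, hx, hy, hz, hxy, hxz, hyz,
      lt_of_le_of_ne hle fun e => hyx y hy hxy (e ▸ le_sup_left)⟩
  intro x y z e
  by_contra hne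
  have hlt : x ⊓ y < x ⊓ (y ⊔ z) :=
    lt_of_le_of_ne (inf_le_inf_left _ le_sup_left) (Ne.symm hne)
  obtain ⟨t, ht1, ht2⟩ := exists_covBy_le_of_lt hlt
  have htx : t ≤ x := le_trans ht2 inf_le_left
  refine crosscut_local hjsd hcr (x ⊓ y) t y z ht1 inf_le_right (e ▸ inf_le_right) ?_ ?_
    (le_trans ht2 inf_le_right)
  · exact fun h => absurd ht1.lt (not_lt_of_ge (le_inf htx h))
  · exact fun h => absurd ht1.lt (not_lt_of_ge (e ▸ le_inf htx h))
end
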